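/- The map Ψ : ℬ → BZ^e, a ↦ M(a) = (M_K(a))_{K∈M_n^×}, is a bijection from the set of Lusztig data onto the set of e-BZ data. -/

import Mathlib

/-- The set of Lusztig data: `a : Π → ℤ_{≥0}`, modeled as an integer-valued function on
`ℤ × ℤ` that is nonnegative everywhere and vanishes off `Π = {(k,l) : 1 ≤ k < l ≤ n+1}`. -/
def IsLusztig (n : ℕ) (a : ℤ → ℤ → ℤ) : Prop :=
  (∀ k l : ℤ, 0 ≤ a k l) ∧ ∀ k l : ℤ, ¬(1 ≤ k ∧ k < l ∧ l ≤ (n : ℤ) + 1) → a k l = 0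

/-- The `p`-th smallest element (1-indexed) `k_p` of a Maya diagram `K`. -/
def kth (K : Finset ℕ) (p : ℕ) : ℕ := (K.sort (· ≤ ·)).getD (p - 1) 0

/-- `C = (c_{p,q})_{1 ≤ p ≤ q ≤ l}` (with `l = |K|`) is a `K`-tableau: an upper-triangular
integer matrix with `c_{p,p} = k_p`, `c_{p,q} ≤ c_{p,q+1}` and `c_{p,q} < c_{p+1,q}`. -/
def IsKTab (K : Finset ℕ) (c : ℕ → ℕ → ℤ) : Prop :=
  (∀ p : ℕ, 1 ≤ p → p ≤ K.card → c p p = (kth K p : ℤ)) ∧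
  (∀ p q : ℕ, 1 ≤ p → p ≤ q → q + 1 ≤ K.card → c p q ≤ c p (q + 1)) ∧
  (∀ p q : ℕ, 1 ≤ p → p + 1 ≤ q → q ≤ K.card → c p q < c (p + 1) q)

/-- `Σ_{1 ≤ p < q ≤ l} a_{c_{p,q}, c_{p,q}+(q−p)}`. -/
def tabSum (a : ℤ → ℤ → ℤ) (K : Finset ℕ) (c : ℕ → ℕ → ℤ) : ℤ :=
  ∑ p ∈ Finset.Icc 1 K.card, ∑ q ∈ Finset.Icc (p + 1) K.card,
    a (c p q) (c p q + ((q : ℤ) - (p : ℤ)))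

/-- `M_K(a) = −Σ_{j=1}^{l} Σ_{i=1}^{k_j−1} a_{i,k_j} + min{ tabSum over K-tableaux }`,
for `K ∈ M_n^×`, with the conventions `M_∅(a) = M_{[1,n+1]}(a) = 0`. -/
noncomputable def MK (n : ℕ) (a : ℤ → ℤ → ℤ) (K : Finset ℕ) : ℤ :=
  if K = ∅ ∨ K = Finset.Icc 1 (n + 1) then 0
  else
    -(∑ k ∈ K, ∑ s ∈ Finset.Icc 1 (k - 1), a (s : ℤ) (k : ℤ)) +
      sInf {z : ℤ | ∃ c : ℕ → ℕ → ℤ, IsKTab K c ∧ z = tabSum a K c}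
/-- A BZ datum of type `A_n`: a collection of integers `M = (M_K)` indexed by Maya diagrams
`K ⊆ [1,n+1]` (modeled as a total function on `Finset ℕ`, with the conventions
`M_∅ = M_{[1,n+1]} = 0`), satisfying the inequalities (BZ-1)' and the 3-term relations
(BZ-2)'. -/
def IsBZ (n : ℕ) (M : Finset ℕ → ℤ) : Prop :=
  M ∅ = 0 ∧ M (Finset.Icc 1 (n + 1)) = 0 ∧
  (∀ i j : ℕ, ∀ K : Finset ℕ, 1 ≤ i → i ≤ n + 1 → 1 ≤ j → j ≤ n + 1 → i ≠ j →
    K ⊆ Finset.Icc 1 (n + 1) → i ∉ K → j ∉ K →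
    M (insert i K) + M (insert j K) ≤ M (insert i (insert j K)) + M K) ∧
  (∀ i j k : ℕ, ∀ K : Finset ℕ, 1 ≤ i → i < j → j < k → k ≤ n + 1 →
    K ⊆ Finset.Icc 1 (n + 1) → i ∉ K → j ∉ K → k ∉ K →
    M (insert i (insert k K)) + M (insert j K) =
      min (M (insert i (insert j K)) + M (insert k K))
        (M (insert j (insert k K)) + M (insert i K)))

/-- A `w₀`-BZ datum: a BZ datum with `M_{[n−i+2,n+1]} = 0` for all `1 ≤ i ≤ n`. -/
def IsW0BZ (n : ℕ) (M : Finset ℕ → ℤ) : Prop :=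
  IsBZ n M ∧ ∀ i : ℕ, 1 ≤ i → i ≤ n → M (Finset.Icc (n - i + 2) (n + 1)) = 0

/-- An `e`-BZ datum: a BZ datum with `M_{[1,i]} = 0` for all `1 ≤ i ≤ n`. -/
def IsEBZ (n : ℕ) (M : Finset ℕ → ℤ) : Prop :=
  IsBZ n M ∧ ∀ i : ℕ, 1 ≤ i → i ≤ n → M (Finset.Icc 1 i) = 0

/-!
The flag minors of a totally positive unipotent matrix satisfy three-term Plücker relations, and
their tropicalizations satisfy (BZ-1)' and (BZ-2)'. Multiplying by an elementary matrix
`1 + E_{s,s+1}` or by a diagonal matrix can be tropicalized directly, and both operations preserve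
these relations. Starting from the zero function, suitable products of such operations produce
`K ↦ M_K(a)`: expanding the product, the terms are nonintersecting paths, that is, sequences of
interlacing families, and these are the `K`-tableaux read along superdiagonals.

An interval has only one tableau, so `M_{[i,j]}(a)` is an explicit linear expression, from which
`a_{i,j}` is recovered as a mixed second difference. Conversely the values of an `e`-BZ datum on
intervals are determined by these second differences, which are nonnegative by (BZ-1)'; all other
values follow from (BZ-2)', applied to the extreme elements of `K` and a gap between them.
-/

/-- A tropical Plücker function on the finite subsets of a linear order: it is supermodular and
satisfies the positive three-term incidence relations. This is the notion of BZ datum without the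
bound `n` and without normalization. -/
structure IsTropicalPlucker {α : Type*} [LinearOrder α] (F : Finset α → ℤ) : Prop where
  supermodular : ∀ ⦃i j : α⦄ ⦃K : Finset α⦄, i ≠ j → i ∉ K → j ∉ K →
    F (insert i K) + F (insert j K) ≤ F (insert i (insert j K)) + F K
  three_term : ∀ ⦃i j k : α⦄ ⦃K : Finset α⦄, i < j → j < k → i ∉ K → j ∉ K → k ∉ K →
    F (insert i (insert k K)) + F (insert j K) =
      min (F (insert i (insert j K)) + F (insert k K)) (F (insert j (insert k K)) + F (insert i K))

/-- The tropicalization of the action of the elementary matrix `1 + E_{s,r}` on minors, a minor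
being indexed by its set of rows: row `s` is replaced by the tropical sum of rows `s` and `r`. -/
def tropicalStep {α : Type*} [DecidableEq α] (s r : α) (F : Finset α → ℤ) (K : Finset α) : ℤ :=
  if s ∈ K ∧ r ∉ K then min (F K) (F (insert r (K.erase s))) else F K

section TropicalStep

variable {α : Type*}

lemma tropicalStep_insert [DecidableEq α] {s r : α} {L : Finset α} (F : Finset α → ℤ) (hsr : s ≠ r)
    (hs : s ∉ L) (hr : r ∉ L) :
    tropicalStep s r F (insert s L) = min (F (insert s L)) (F (insert r L)) := by
  rw [tropicalStep, if_pos (by simp [hsr.symm, hr]), Finset.erase_insert hs]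

lemma tropicalStep_insert_insert [DecidableEq α] {s r i : α} {L : Finset α} (F : Finset α → ℤ)
    (hsr : s ≠ r) (hs : s ∉ L) (hr : r ∉ L) (his : i ≠ s) (hir : i ≠ r) :
    tropicalStep s r F (insert i (insert s L)) =
      min (F (insert i (insert s L))) (F (insert i (insert r L))) := by
  rw [Finset.insert_comm i s, tropicalStep_insert F hsr (by grind) (by grind),
    Finset.insert_comm r i]

lemma tropicalStep_insert_insert_insert [DecidableEq α] {s r i j : α} {L : Finset α}
    (F : Finset α → ℤ) (hsr : s ≠ r) (hs : s ∉ L) (hr : r ∉ L) (his : i ≠ s) (hir : i ≠ r)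
    (hjs : j ≠ s) (hjr : j ≠ r) :
    tropicalStep s r F (insert i (insert j (insert s L))) =
      min (F (insert i (insert j (insert s L)))) (F (insert i (insert j (insert r L)))) := by
  rw [Finset.insert_comm j s, tropicalStep_insert_insert F hsr (by grind) (by grind) his hir,
    Finset.insert_comm j r]

lemma tropicalStep_of_notMem [DecidableEq α] {s : α} {K : Finset α} (r : α) (F : Finset α → ℤ)
    (hs : s ∉ K) : tropicalStep s r F K = F K :=
  if_neg fun h => hs h.1

lemma tropicalStep_of_mem [DecidableEq α] {r : α} {K : Finset α} (s : α) (F : Finset α → ℤ)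
    (hr : r ∈ K) : tropicalStep s r F K = F K :=
  if_neg fun h => h.2 hr

lemma min_add_add_min_of_eq_min {u u' v v' P Q : ℤ} (hu : u = min P u') (hv : v = min Q v') :
    min (u + v) (u' + v') = min (P + Q) (min (u + v') (u' + v)) := by
  omega

lemma min_add_exchange {u u' v v' x x' y y' P P' Q Q' : ℤ} (hu : u = min P u') (hv : v = min Q v')
    (hx : x = min P' x') (hy : y = min Q' y') (hPQ : P + Q = P' + Q') :
    min (min (u + v) (u' + v')) (min (x + y') (x' + y)) =
      min (min (u + v') (u' + v)) (min (x + y) (x' + y')) := by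
  rw [min_add_add_min_of_eq_min hu hv, min_add_add_min_of_eq_min hx hy, hPQ]
  ac_rfl

lemma min_cross_of_min_exchange {sik rik sj rj sij rij sk rk sjk rjk si ri : ℤ}
    (hs : sik + sj = min (sij + sk) (sjk + si)) (hr : rik + rj = min (rij + rk) (rjk + ri))
    (h : min (min ((sij + rj) + (sk + rj)) ((rij + sj) + (rk + sj)))
        (min ((sjk + rj) + (si + rj)) ((rjk + sj) + (ri + sj))) =
      min (min ((sij + rj) + (rk + sj)) ((rij + sj) + (sk + rj)))
        (min ((sjk + rj) + (ri + sj)) ((rjk + sj) + (si + rj)))) :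
    min (sik + rj) (rik + sj) =
      min (min (sij + rk) (rij + sk)) (min (sjk + ri) (rjk + si)) := by
  have hl : min (sik + rj) (rik + sj) + (sj + rj) =
      min (min ((sij + rj) + (sk + rj)) ((rij + sj) + (rk + sj)))
        (min ((sjk + rj) + (si + rj)) ((rjk + sj) + (ri + sj))) := by omega
  omega

lemma min_add_min_eq_min_min (a b c d : ℤ) :
    min a b + min c d = min (min (a + c) (b + d)) (min (a + d) (b + c)) := by
  omega

lemma min_add_min_of_min_cross {sik rik sj rj sij rij sk rk sjk rjk si ri : ℤ}
    (hs : sik + sj = min (sij + sk) (sjk + si)) (hr : rik + rj = min (rij + rk) (rjk + ri))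
    (h : min (sik + rj) (rik + sj) =
      min (min (sij + rk) (rij + sk)) (min (sjk + ri) (rjk + si))) :
    min sik rik + min sj rj = min (min sij rij + min sk rk) (min sjk rjk + min si ri) := by
  rw [min_add_min_eq_min_min, min_add_min_eq_min_min, min_add_min_eq_min_min, hs, hr, h]
  ac_rfl

lemma lt_or_lt_of_covBy [LinearOrder α] {s r x : α} (h : s ⋖ r) (hs : x ≠ s) (hr : x ≠ r) :
    x < s ∨ r < x :=
  hs.lt_or_gt.imp_right fun hsx => (h.ge_of_gt hsx).lt_of_ne' hr

variable [LinearOrder α] {F : Finset α → ℤ} {s r i j k l : α} {K L : Finset α}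

namespace IsTropicalPlucker

lemma four_term (hF : IsTropicalPlucker F) (hij : i < j) (hjk : j < k) (hkl : k < l)
    (hi : i ∉ K) (hj : j ∉ K) (hk : k ∉ K) (hl : l ∉ K) :
    F (insert i (insert k K)) + F (insert j (insert l K)) =
      min (F (insert i (insert j K)) + F (insert k (insert l K)))
        (F (insert i (insert l K)) + F (insert j (insert k K))) := by
  have hijk := hF.three_term hij hjk hi hj hk
  have hjkl := hF.three_term hjk hkl hj hk hl
  have hikl := hF.three_term (hij.trans hjk) hkl hi hk hl
  omega

lemma min_le_of_ne (hF : IsTropicalPlucker F) (hij : i ≠ j) (hjk : j ≠ k) (hik : i ≠ k)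
    (hi : i ∉ K) (hj : j ∉ K) (hk : k ∉ K) :
    min (F (insert i (insert k K)) + F (insert j K)) (F (insert j (insert k K)) + F (insert i K)) ≤
      F (insert i (insert j K)) + F (insert k K) := by
  wlog hlt : i < j generalizing i j
  · have := this hij.symm hik hjk hj hi (hij.lt_or_gt.resolve_left hlt)
    rwa [min_comm, Finset.insert_comm j i] at this
  rcases hjk.lt_or_gt with hjk | hkj
  · have := hF.three_term hlt hjk hi hj hk
    omega
  rcases hik.lt_or_gt with hik | hki
  · have := hF.three_term hik hkj hi hk hj
    rw [Finset.insert_comm k j] at this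
    omega
  · have := hF.three_term hki hlt hk hi hj
    rw [Finset.insert_comm k j, Finset.insert_comm k i] at this
    omega

lemma supermodular_step_of_notMem (hF : IsTropicalPlucker F) (hsr : s ≠ r) (hij : i ≠ j)
    (hs : s ∉ K) (hr : r ∉ K) (hi : i ∉ K) (hj : j ∉ K) :
    tropicalStep s r F (insert i K) + tropicalStep s r F (insert j K) ≤
      tropicalStep s r F (insert i (insert j K)) + tropicalStep s r F K := by
  wlog hsj : s ≠ j generalizing i j
  · have := this hij.symm hj hi (by grind)
    rwa [add_comm, Finset.insert_comm j i] at this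
  rw [tropicalStep_of_notMem r F hs, tropicalStep_of_notMem r F (by grind : s ∉ insert j K)]
  have hFij := hF.supermodular hij hi hj
  by_cases hsi : s = i
  · subst hsi
    rw [tropicalStep_insert F hsr hs hr]
    by_cases hrj : r = j
    · rw [tropicalStep_of_mem s F (by simp [hrj])]
      omega
    · rw [tropicalStep_insert F hsr (by grind) (by grind)]
      have hFrj := hF.supermodular hrj hr hj
      omega
  · rwa [tropicalStep_of_notMem r F (by grind), tropicalStep_of_notMem r F (by grind)]

lemma supermodular_step_insert (hF : IsTropicalPlucker F) (hsr : s ≠ r) (hij : i ≠ j)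
    (hs : s ∉ L) (hr : r ∉ L) (hi : i ∉ insert s L) (hj : j ∉ insert s L) :
    tropicalStep s r F (insert i (insert s L)) + tropicalStep s r F (insert j (insert s L)) ≤
      tropicalStep s r F (insert i (insert j (insert s L))) + tropicalStep s r F (insert s L) := by
  wlog hrj : r ≠ j generalizing i j
  · have := this hij.symm hj hi (by grind)
    rwa [add_comm, Finset.insert_comm j i] at this
  have hjr : j ∉ insert r L := by grind
  have hsrL : s ∉ insert r L := by grind
  have hFs := hF.supermodular hij hi hj
  have hFr := hF.supermodular (by grind : s ≠ j) hsrL hjr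
  rw [Finset.insert_comm j s, tropicalStep_insert F hsr hs hr,
    tropicalStep_insert F hsr (by grind : s ∉ insert j L) (by grind)]
  by_cases hri : r = i
  · subst hri
    rw [tropicalStep_of_mem s F (by grind), tropicalStep_of_mem s F (by grind)]
    simp only [Finset.insert_comm] at hFs hFr ⊢
    omega
  rw [Finset.insert_comm i s, Finset.insert_comm i s,
    tropicalStep_insert F hsr (by grind) (by grind),
    tropicalStep_insert F hsr (by grind) (by grind)]
  have hir : i ∉ insert r L := by grind
  have hrsL : r ∉ insert s L := by grind
  have hFrij := hF.supermodular hij hir hjr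
  have hFsri := hF.supermodular hri hrsL hi
  have hFsrj := hF.supermodular hrj hrsL hj
  have hFrsi := hF.supermodular (by grind : s ≠ i) hsrL hir
  have hFsijr := hF.min_le_of_ne hij (Ne.symm hrj) (Ne.symm hri) hi hj hrsL
  have hFrijs := hF.min_le_of_ne hij (by grind) (by grind) hir hjr hsrL
  simp only [Finset.insert_comm] at *
  omega

lemma supermodular_step (hF : IsTropicalPlucker F) (hsr : s ≠ r) (hij : i ≠ j)
    (hi : i ∉ K) (hj : j ∉ K) :
    tropicalStep s r F (insert i K) + tropicalStep s r F (insert j K) ≤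
      tropicalStep s r F (insert i (insert j K)) + tropicalStep s r F K := by
  by_cases hr : r ∈ K
  · simpa only [tropicalStep_of_mem s F, hr, Finset.mem_insert, or_true] using
      hF.supermodular hij hi hj
  by_cases hs : s ∈ K
  · rw [← Finset.insert_erase hs] at hi hj ⊢
    exact hF.supermodular_step_insert hsr hij (by simp) (by grind) hi hj
  · exact hF.supermodular_step_of_notMem hsr hij hs hr hi hj

-- The bracketed sums pair up by three- or four-term relations of the shape needed in
-- `min_add_exchange`. Which relations these are depends on the position of `i`, `j`, `k` relative
-- to `s ⋖ r`.
lemma min_exchange (hF : IsTropicalPlucker F) (hsr : s ⋖ r) (hij : i < j) (hjk : j < k)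
    (hs : s ∉ L) (hr : r ∉ L) (hi : i ∉ insert s (insert r L)) (hj : j ∉ insert s (insert r L))
    (hk : k ∉ insert s (insert r L)) :
    min (min ((F (insert i (insert j (insert s L))) + F (insert j (insert r L))) +
            (F (insert k (insert s L)) + F (insert j (insert r L))))
          ((F (insert i (insert j (insert r L))) + F (insert j (insert s L))) +
            (F (insert k (insert r L)) + F (insert j (insert s L)))))
        (min ((F (insert j (insert k (insert s L))) + F (insert j (insert r L))) +
            (F (insert i (insert s L)) + F (insert j (insert r L))))
          ((F (insert j (insert k (insert r L))) + F (insert j (insert s L))) +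
            (F (insert i (insert r L)) + F (insert j (insert s L))))) =
      min (min ((F (insert i (insert j (insert s L))) + F (insert j (insert r L))) +
            (F (insert k (insert r L)) + F (insert j (insert s L))))
          ((F (insert i (insert j (insert r L))) + F (insert j (insert s L))) +
            (F (insert k (insert s L)) + F (insert j (insert r L)))))
        (min ((F (insert j (insert k (insert s L))) + F (insert j (insert r L))) +
            (F (insert i (insert r L)) + F (insert j (insert s L))))
          ((F (insert j (insert k (insert r L))) + F (insert j (insert s L))) +
            (F (insert i (insert s L)) + F (insert j (insert r L))))) := by
  simp only [Finset.mem_insert, not_or] at hi hj hk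
  obtain ⟨⟨his, hir, hi⟩, ⟨hjs, hjr, hj⟩, hks, hkr, hk⟩ := And.intro hi (And.intro hj hk)
  have hs' : s ∉ insert j L := by grind
  have hr' : r ∉ insert j L := by grind
  have hi' : i ∉ insert j L := by grind
  have hk' : k ∉ insert j L := by grind
  rcases lt_or_lt_of_covBy hsr hjs hjr with hjs | hrj
  · have hrij := (hF.three_term (hij.trans hjs) hsr.lt hi' hs' hr').trans (min_comm _ _)
    have hsi := hF.four_term hij hjs hsr.lt hi hj hs hr
    rcases lt_or_lt_of_covBy hsr hks hkr with hks | hrk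
    · have hrk := hF.four_term hjk hks hsr.lt hj hk hs hr
      have hrjk := (hF.three_term hks hsr.lt hk' hs' hr').trans (min_comm _ _)
      have := min_add_exchange hrij hrk hrjk hsi (by simp only [Finset.insert_comm]; ring)
      simp only [Finset.insert_comm] at this ⊢
      refine Eq.trans ?_ (this.trans ?_) <;> ac_rfl
    · have hsk := (hF.four_term hjs hsr.lt hrk hj hs hr hk).trans (min_comm _ _)
      have hsjk := hF.three_term hsr.lt hrk hs' hr' hk'
      have := min_add_exchange hrij hsk hsjk hsi (by simp only [Finset.insert_comm]; ring)
      simp only [Finset.insert_comm] at this ⊢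
      refine Eq.trans ?_ (this.symm.trans ?_) <;> ac_rfl
  · have hrk := hF.four_term hsr.lt hrj hjk hs hr hj hk
    have hsjk := hF.three_term hsr.lt (hrj.trans hjk) hs' hr' hk'
    rcases lt_or_lt_of_covBy hsr his hir with his | hri
    · have hrij := (hF.three_term his hsr.lt hi' hs' hr').trans (min_comm _ _)
      have hri := (hF.four_term his hsr.lt hrj hi hs hr hj).trans (min_comm _ _)
      have := min_add_exchange hrij hrk hsjk hri (by simp only [Finset.insert_comm]; ring)
      simp only [Finset.insert_comm] at this ⊢
      refine Eq.trans ?_ (this.trans ?_) <;> ac_rfl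
    · have hsij := hF.three_term hsr.lt hri hs' hr' hi'
      have hsi := hF.four_term hsr.lt hri hij hs hr hi hj
      have := min_add_exchange hsij hrk hsjk hsi (by simp only [Finset.insert_comm]; ring)
      simp only [Finset.insert_comm] at this ⊢
      refine Eq.trans ?_ (this.symm.trans ?_) <;> ac_rfl

lemma three_term_step_insert_of_notMem (hF : IsTropicalPlucker F) (hsr : s ⋖ r) (hij : i < j)
    (hjk : j < k) (hs : s ∉ L) (hr : r ∉ L) (hi : i ∉ insert s (insert r L))
    (hj : j ∉ insert s (insert r L)) (hk : k ∉ insert s (insert r L)) :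
    tropicalStep s r F (insert i (insert k (insert s L))) +
        tropicalStep s r F (insert j (insert s L)) =
      min (tropicalStep s r F (insert i (insert j (insert s L))) +
          tropicalStep s r F (insert k (insert s L)))
        (tropicalStep s r F (insert j (insert k (insert s L))) +
          tropicalStep s r F (insert i (insert s L))) := by
  have hFs := hF.three_term (K := insert s L) hij hjk (by grind) (by grind) (by grind)
  have hFr := hF.three_term (K := insert r L) hij hjk (by grind) (by grind) (by grind)
  have hexchange := hF.min_exchange hsr hij hjk hs hr hi hj hk
  simp only [Finset.mem_insert, not_or] at hi hj hk
  simp only [tropicalStep_insert_insert F hsr.ne hs hr, hi, hj, hk, ne_eq, not_false_eq_true,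
    tropicalStep_insert_insert_insert F hsr.ne hs hr]
  exact min_add_min_of_min_cross hFs hFr (min_cross_of_min_exchange hFs hFr hexchange)

lemma three_term_step_insert (hF : IsTropicalPlucker F) (hsr : s ⋖ r) (hij : i < j)
    (hjk : j < k) (hs : s ∉ L) (hr : r ∉ L) (hi : i ∉ insert s L) (hj : j ∉ insert s L)
    (hk : k ∉ insert s L) :
    tropicalStep s r F (insert i (insert k (insert s L))) +
        tropicalStep s r F (insert j (insert s L)) =
      min (tropicalStep s r F (insert i (insert j (insert s L))) +
          tropicalStep s r F (insert k (insert s L)))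
        (tropicalStep s r F (insert j (insert k (insert s L))) +
          tropicalStep s r F (insert i (insert s L))) := by
  have hFs := hF.three_term hij hjk hi hj hk
  simp only [Finset.mem_insert, not_or] at hi hj hk
  obtain ⟨his, hjs, hks⟩ := And.intro hi.1 (And.intro hj.1 hk.1)
  rcases eq_or_ne i r with rfl | hir
  · have hFr := hF.three_term (K := insert i L) (hsr.lt.trans hij) hjk (by grind) (by grind)
      (by grind)
    simp only [tropicalStep_of_mem s F, Finset.mem_insert_self,
      tropicalStep_insert_insert F hsr.ne hs hr, tropicalStep_insert_insert_insert F hsr.ne hs hr,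
      ne_eq, hjs, hks, hij.ne', (hij.trans hjk).ne', not_false_eq_true]
    simp only [Finset.insert_comm] at hFs hFr ⊢
    omega
  rcases eq_or_ne j r with rfl | hjr
  · have his := (lt_or_lt_of_covBy hsr his hir).resolve_right hij.not_gt
    have hFr := hF.three_term (K := insert j L) his (hsr.lt.trans hjk) (by grind) (by grind)
      (by grind)
    simp only [tropicalStep_of_mem s F, Finset.mem_insert_self, Finset.mem_insert_of_mem,
      tropicalStep_insert_insert F hsr.ne hs hr, tropicalStep_insert_insert_insert F hsr.ne hs hr,
      ne_eq, his.ne, hks, hir, hjk.ne', not_false_eq_true]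
    simp only [Finset.insert_comm] at hFs hFr ⊢
    omega
  rcases eq_or_ne k r with rfl | hkr
  · have hjs := (lt_or_lt_of_covBy hsr hjs hjr).resolve_right hjk.not_gt
    have hFr := hF.three_term (K := insert k L) hij hjs (by grind) (by grind) (by grind)
    simp only [tropicalStep_of_mem s F, Finset.mem_insert_self, Finset.mem_insert_of_mem,
      tropicalStep_insert_insert F hsr.ne hs hr, tropicalStep_insert_insert_insert F hsr.ne hs hr,
      ne_eq, his, hjs.ne, hir, hjr, not_false_eq_true]
    simp only [Finset.insert_comm] at hFs hFr ⊢
    omega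
  exact hF.three_term_step_insert_of_notMem hsr hij hjk hs hr (by grind) (by grind) (by grind)

lemma three_term_step_of_notMem (hF : IsTropicalPlucker F) (hsr : s ⋖ r) (hij : i < j)
    (hjk : j < k) (hs : s ∉ K) (hr : r ∉ K) (hi : i ∉ K) (hj : j ∉ K) (hk : k ∉ K) :
    tropicalStep s r F (insert i (insert k K)) + tropicalStep s r F (insert j K) =
      min (tropicalStep s r F (insert i (insert j K)) + tropicalStep s r F (insert k K))
        (tropicalStep s r F (insert j (insert k K)) + tropicalStep s r F (insert i K)) := by
  have hFs := hF.three_term hij hjk hi hj hk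
  rcases eq_or_ne i s with rfl | his
  · simp only [tropicalStep_of_notMem r F, tropicalStep_insert F hsr.ne, Finset.mem_insert, hs, hr,
      hij.ne, (hij.trans hjk).ne, ((hsr.ge_of_gt hij).trans_lt hjk).ne, or_self,
      not_false_eq_true]
    rcases eq_or_ne j r with rfl | hjr
    · rw [tropicalStep_of_mem i F (by simp)]
      omega
    · have hrj := (lt_or_lt_of_covBy hsr hij.ne' hjr).resolve_left hij.not_gt
      have hFr := hF.three_term hrj hjk hr hj hk
      rw [tropicalStep_insert F hsr.ne (by grind) (by grind)]
      omega
  rcases eq_or_ne j s with rfl | hjs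
  · rw [Finset.insert_comm i j]
    simp only [tropicalStep_of_notMem r F, tropicalStep_insert F hsr.ne, Finset.mem_insert, hs, hr,
      hjk.ne, hij.ne', (hij.trans hsr.lt).ne', or_self, not_false_eq_true]
    rcases eq_or_ne k r with rfl | hkr
    · rw [tropicalStep_of_mem j F (by simp), Finset.insert_comm k i]
      rw [Finset.insert_comm i j] at hFs
      omega
    · have hrk := (lt_or_lt_of_covBy hsr hjk.ne' hkr).resolve_left hjk.not_gt
      have hFr := hF.three_term (hij.trans hsr.lt) hrk hi hr hk
      rw [tropicalStep_insert F hsr.ne (by grind) (by grind), Finset.insert_comm r i]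
      rw [Finset.insert_comm i j] at hFs
      omega
  rcases eq_or_ne k s with rfl | hks
  · have hFr := hF.three_term hij (hjk.trans hsr.lt) hi hj hr
    have hir := (hij.trans (hjk.trans hsr.lt)).ne
    have hjr := (hjk.trans hsr.lt).ne
    rw [tropicalStep_insert F hsr.ne hs hr, tropicalStep_insert_insert F hsr.ne hs hr his hir,
      tropicalStep_insert_insert F hsr.ne hs hr hjs hjr, tropicalStep_of_notMem r F (by grind),
      tropicalStep_of_notMem r F (by grind), tropicalStep_of_notMem r F (by grind)]
    omega
  · simpa only [tropicalStep_of_notMem r F, Finset.mem_insert, hs, his.symm, hjs.symm, hks.symm,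
      or_self, not_false_eq_true] using hFs

lemma three_term_step (hF : IsTropicalPlucker F) (hsr : s ⋖ r) (hij : i < j)
    (hjk : j < k) (hi : i ∉ K) (hj : j ∉ K) (hk : k ∉ K) :
    tropicalStep s r F (insert i (insert k K)) + tropicalStep s r F (insert j K) =
      min (tropicalStep s r F (insert i (insert j K)) + tropicalStep s r F (insert k K))
        (tropicalStep s r F (insert j (insert k K)) + tropicalStep s r F (insert i K)) := by
  by_cases hr : r ∈ K
  · simpa only [tropicalStep_of_mem s F, hr, Finset.mem_insert, or_true] using
      hF.three_term hij hjk hi hj hk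
  by_cases hs : s ∈ K
  · rw [← Finset.insert_erase hs] at hi hj hk ⊢
    exact hF.three_term_step_insert hsr hij hjk (by simp) (by grind) hi hj hk
  · exact hF.three_term_step_of_notMem hsr hij hjk hs hr hi hj hk

lemma step (hF : IsTropicalPlucker F) (hsr : s ⋖ r) : IsTropicalPlucker (tropicalStep s r F) where
  supermodular _ _ _ := hF.supermodular_step hsr.ne
  three_term _ _ _ _ := hF.three_term_step hsr

lemma add_sum (hF : IsTropicalPlucker F) (w : α → ℤ) :
    IsTropicalPlucker fun K => F K + ∑ c ∈ K, w c where
  supermodular i j K hij hi hj := by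
    have := hF.supermodular hij hi hj
    simp only [Finset.sum_insert, Finset.mem_insert, hij, hi, hj, or_self, not_false_eq_true]
    linarith
  three_term i j k K hij hjk hi hj hk := by
    have := hF.three_term hij hjk hi hj hk
    simp only [Finset.sum_insert, Finset.mem_insert, hij.ne, hjk.ne, (hij.trans hjk).ne, hi, hj, hk,
      or_self, not_false_eq_true]
    omega

lemma zero : IsTropicalPlucker (0 : Finset α → ℤ) where
  supermodular := by simp
  three_term := by simp

end IsTropicalPlucker
end TropicalStep

/-- The tropical action of the product of elementary matrices
`(1 + E_{s,s+1}) (1 + E_{s+1,s+2}) ⋯ (1 + E_{s+m-1,s+m})`. -/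
def tropicalSweep : ℕ → ℕ → (Finset ℕ → ℤ) → Finset ℕ → ℤ
  | 0, _, F => F
  | m + 1, s, F => tropicalStep s (s + 1) (tropicalSweep m (s + 1) F)

lemma IsTropicalPlucker.sweep {F : Finset ℕ → ℤ} (hF : IsTropicalPlucker F) :
    ∀ m s, IsTropicalPlucker (tropicalSweep m s F)
  | 0, _ => hF
  | m + 1, s => (hF.sweep m (s + 1)).step (Nat.covBy_iff_add_one_eq.2 rfl)

/-- The result of applying to the zero function `m` times a diagonal action, with weights `w x` in
round `x` (the last round being `x = 0`), followed by the full sweep over `[0, N]`. These are the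
tropical flag minors of the corresponding product of bidiagonal matrices. -/
def tropicalMinor (N : ℕ) : ℕ → (ℕ → ℕ → ℤ) → Finset ℕ → ℤ
  | 0, _ => 0
  | m + 1, w => tropicalSweep N 0 fun K =>
      tropicalMinor N m (fun x => w (x + 1)) K + ∑ c ∈ K, w 0 c

lemma isTropicalPlucker_tropicalMinor (N : ℕ) :
    ∀ m w, IsTropicalPlucker (tropicalMinor N m w)
  | 0, _ => .zero
  | m + 1, w => ((isTropicalPlucker_tropicalMinor N m fun x => w (x + 1)).add_sum (w 0)).sweep N 0

section Interlacing

variable {ι : Type*}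

/-- The total weight of a pattern, the entry `c` of layer `x + 1` having weight `w x c`. -/
def patternSum (w : ℕ → ℕ → ℤ) (m : ℕ) (I : Finset ι) (e : ℕ → ι → ℕ) : ℤ :=
  ∑ x ∈ Finset.range m, ∑ p ∈ I, w x (e (x + 1) p)

lemma patternSum_succ {I : Finset ι} {m : ℕ} (w : ℕ → ℕ → ℤ) {e : ℕ → ι → ℕ}
    (he : Set.InjOn (e 1) I) :
    patternSum w (m + 1) I e =
      patternSum (fun x => w (x + 1)) m I (fun x => e (x + 1)) + ∑ c ∈ I.image (e 1), w 0 c := by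
  rw [patternSum, Finset.sum_range_succ', Finset.sum_image he, patternSum]

variable [LinearOrder ι]

/-- The families `g` indexed by `I` with `f p ≤ g p < f q` for `p < q` and `g p ≤ N`, in which the
entries of `f` below `s` are not moved. They describe the terms in the expansion of a sweep that
starts at `s`. -/
def interlacing (N s : ℕ) (I : Finset ι) (f : ι → ℕ) : Set (ι → ℕ) :=
  {g | (∀ p ∈ I, f p ≤ g p ∧ g p ≤ N ∧ (f p < s → g p = f p)) ∧
    ∀ p ∈ I, ∀ q ∈ I, p < q → g p < f q}

variable {N s : ℕ} {I : Finset ι} {f g : ι → ℕ} {p : ι}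

lemma strictMonoOn_of_mem_interlacing (hg : g ∈ interlacing N s I f) : StrictMonoOn g I :=
  fun p hp q hq hpq => (hg.2 p hp q hq hpq).trans_le (hg.1 q hq).1

lemma image_update (hf : Set.InjOn f I) (hp : p ∈ I) (v : ℕ) :
    I.image (Function.update f p v) = insert v ((I.image f).erase (f p)) := by
  ext x
  simp only [Finset.mem_image, Finset.mem_insert, Finset.mem_erase, Function.update_apply]
  grind [Set.InjOn]

lemma strictMonoOn_update_add_one (hf : StrictMonoOn f I)
    (hs : f p + 1 ∉ I.image f) : StrictMonoOn (Function.update f p (f p + 1)) I := by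
  intro q hq q' hq' hlt
  have := hf hq hq' hlt
  grind [Function.update_apply]

lemma interlacing_eq_add_one_of_fixed (hf : StrictMonoOn f I)
    (hs : s ∈ I.image f → s + 1 ∈ I.image f) :
    interlacing N s I f = interlacing N (s + 1) I f := by
  ext g
  refine ⟨fun hg => ⟨fun p hp => ⟨(hg.1 p hp).1, (hg.1 p hp).2.1, fun hlt => ?_⟩, hg.2⟩,
    fun hg => ⟨fun p hp => ⟨(hg.1 p hp).1, (hg.1 p hp).2.1,
      fun hlt => (hg.1 p hp).2.2 (by omega)⟩, hg.2⟩⟩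
  rcases (Nat.lt_succ_iff_lt_or_eq.1 hlt) with hlt | rfl
  · exact (hg.1 p hp).2.2 hlt
  · obtain ⟨q, hq, hqp⟩ := Finset.mem_image.1 (hs (Finset.mem_image_of_mem f hp))
    have hpq : p < q := (hf.lt_iff_lt hp hq).1 (by omega)
    have := hg.2 p hp q hq hpq
    have := (hg.1 p hp).1
    omega

lemma interlacing_eq_union (hf : StrictMonoOn f I) (hp : p ∈ I) :
    interlacing N (f p) I f = interlacing N (f p + 1) I f ∪
      interlacing N (f p + 1) I (Function.update f p (f p + 1)) := by
  have hinj : ∀ q ∈ I, f q = f p → q = p := fun q hq => hf.injOn hq hp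
  ext g
  simp only [interlacing, Set.mem_union, Set.mem_ofPred_eq, Function.update_apply]
  constructor
  · rintro ⟨h1, h2⟩
    rcases eq_or_ne (g p) (f p) with hgp | hgp
    · left
      grind
    · right
      grind
  · rintro (⟨h1, h2⟩ | ⟨h1, h2⟩)
    · grind
    · grind [StrictMonoOn]

lemma isLeast_tropicalSweep (H : Finset ℕ → ℤ) (m : ℕ) (hf : StrictMonoOn f I)
    (hN : ∀ p ∈ I, f p ≤ s + m) :
    IsLeast ((fun g => H (I.image g)) '' interlacing (s + m) s I f)
      (tropicalSweep m s H (I.image f)) := by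
  induction m generalizing s f with
  | zero =>
    refine ⟨⟨f, ⟨fun p hp => ⟨le_rfl, hN p hp, fun _ => rfl⟩, fun p hp q hq => hf hp hq⟩, rfl⟩, ?_⟩
    rintro _ ⟨g, hg, rfl⟩
    have hgf : ∀ p ∈ I, g p = f p := fun p hp => by
      have := hg.1 p hp
      omega
    exact (congrArg H (Finset.image_congr hgf)).ge
  | succ m ih =>
    have hN' : s + (m + 1) = s + 1 + m := by ring
    rw [hN'] at hN ⊢
    by_cases hs : s ∈ I.image f ∧ s + 1 ∉ I.image f
    · obtain ⟨hs, hs'⟩ := hs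
      obtain ⟨p, hp, rfl⟩ := Finset.mem_image.1 hs
      rw [tropicalSweep, tropicalStep, if_pos ⟨hs, hs'⟩, ← image_update hf.injOn hp,
        interlacing_eq_union hf hp, Set.image_union]
      refine (ih hf hN).union (ih (strictMonoOn_update_add_one hf hs') fun q hq => ?_)
      grind [Function.update_apply]
    · rw [tropicalSweep, tropicalStep, if_neg hs, interlacing_eq_add_one_of_fixed hf (by tauto)]
      exact ih hf hN

lemma mem_interlacing_congr {f' g' : ι → ℕ} (hf : Set.EqOn f f' I) (hg : Set.EqOn g g' I) :
    g ∈ interlacing N s I f ↔ g' ∈ interlacing N s I f' := by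
  simp only [interlacing, Set.mem_ofPred_eq]
  grind [Set.EqOn]

/-- Sequences of `m` successively interlacing families that start at `f`: the nonintersecting paths
that compute a tropical minor. -/
def interlacingPattern (N m : ℕ) (I : Finset ι) (f : ι → ℕ) : Set (ℕ → ι → ℕ) :=
  {e | Set.EqOn (e 0) f I ∧ ∀ x < m, e (x + 1) ∈ interlacing N 0 I (e x)}

lemma mem_interlacingPattern_succ {m : ℕ} {e : ℕ → ι → ℕ} :
    e ∈ interlacingPattern N (m + 1) I f ↔ Set.EqOn (e 0) f I ∧ e 1 ∈ interlacing N 0 I f ∧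
      (fun x => e (x + 1)) ∈ interlacingPattern N m I (e 1) := by
  refine and_congr_right fun h0 => ?_
  rw [Nat.forall_lt_succ_left, mem_interlacing_congr h0 fun _ _ => rfl]
  exact and_congr_right fun _ => ⟨fun h => ⟨fun _ _ => rfl, h⟩, fun h => h.2⟩

lemma tropicalMinor_le_patternSum {m : ℕ} (w : ℕ → ℕ → ℤ) {e : ℕ → ι → ℕ} (hf : StrictMonoOn f I)
    (hN : ∀ p ∈ I, f p ≤ N) (he : e ∈ interlacingPattern N m I f) :
    tropicalMinor N m w (I.image f) ≤ patternSum w m I e := by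
  induction m generalizing w f e with
  | zero => simp [tropicalMinor, patternSum]
  | succ m ih =>
    obtain ⟨-, he1, he⟩ := mem_interlacingPattern_succ.1 he
    have hmono := strictMonoOn_of_mem_interlacing he1
    rw [patternSum_succ w hmono.injOn]
    refine ((isLeast_tropicalSweep _ N hf (by simpa using hN)).2
      ⟨e 1, by simpa using he1, rfl⟩).trans ?_
    exact add_le_add_left (ih _ hmono (fun p hp => (he1.1 p hp).2.1) he) _

lemma exists_tropicalMinor_eq_patternSum (m : ℕ) (w : ℕ → ℕ → ℤ) (hf : StrictMonoOn f I)
    (hN : ∀ p ∈ I, f p ≤ N) :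
    ∃ e ∈ interlacingPattern N m I f, tropicalMinor N m w (I.image f) = patternSum w m I e := by
  induction m generalizing w f with
  | zero => exact ⟨fun _ => f, ⟨fun _ _ => rfl, by simp⟩, by simp [tropicalMinor, patternSum]⟩
  | succ m ih =>
    obtain ⟨g, hg, hmin⟩ := (isLeast_tropicalSweep (s := 0) (fun K =>
      tropicalMinor N m (fun x => w (x + 1)) K + ∑ c ∈ K, w 0 c) N hf (by simpa using hN)).1
    rw [zero_add] at hg
    have hmono := strictMonoOn_of_mem_interlacing hg
    obtain ⟨e, he, hsum⟩ := ih (fun x => w (x + 1)) hmono fun p hp => (hg.1 p hp).2.1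
    have he0 : I.image (e 0) = I.image g := Finset.image_congr he.1
    refine ⟨fun x => x.casesOn f e, mem_interlacingPattern_succ.2 ⟨fun _ _ => rfl, ?_, ?_⟩, ?_⟩
    · exact (mem_interlacing_congr (fun _ _ => rfl) he.1.symm).1 hg
    · exact ⟨fun _ _ => rfl, he.2⟩
    · rw [patternSum_succ w (hmono.injOn.congr he.1.symm), tropicalMinor, ← hmin]
      exact congrArg₂ (· + ·) hsum (congrArg (∑ c ∈ ·, w 0 c) he0.symm)

end Interlacing

lemma kth_eq_orderEmbOfFin {K : Finset ℕ} {p : ℕ} (hp : p ∈ Finset.Icc 1 K.card) :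
    kth K p = K.orderEmbOfFin rfl ⟨p - 1, by grind⟩ := by
  rw [Finset.orderEmbOfFin_apply, kth, List.getD_eq_getElem]
  rfl

lemma strictMonoOn_kth (K : Finset ℕ) : StrictMonoOn (kth K) (Finset.Icc 1 K.card) := by
  intro p hp q hq hpq
  rw [Finset.mem_coe] at hp hq
  rw [kth_eq_orderEmbOfFin hp, kth_eq_orderEmbOfFin hq]
  refine (K.orderEmbOfFin rfl).strictMono (Fin.mk_lt_mk.2 ?_)
  grind

lemma image_kth (K : Finset ℕ) : (Finset.Icc 1 K.card).image (kth K) = K := by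
  refine Finset.eq_of_subset_of_card_le (Finset.image_subset_iff.2 fun p hp => ?_) ?_
  · rw [kth_eq_orderEmbOfFin hp]
    exact Finset.orderEmbOfFin_mem _ _ _
  · rw [Finset.card_image_of_injOn (strictMonoOn_kth K).injOn, Nat.card_Icc, Nat.add_sub_cancel]

lemma kth_mem {K : Finset ℕ} {p : ℕ} (hp : p ∈ Finset.Icc 1 K.card) : kth K p ∈ K :=
  (image_kth K).subset (Finset.mem_image_of_mem _ hp)

lemma kth_Icc {i j p : ℕ} (hp : p ∈ Finset.Icc 1 (Finset.Icc i j).card) :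
    kth (Finset.Icc i j) p = i + (p - 1) := by
  rw [kth_eq_orderEmbOfFin hp,
    ← Finset.orderEmbOfFin_unique (f := fun t : Fin _ => i + t) rfl (fun t => ?_) fun t u htu => ?_]
  · have := t.2
    simp only [Nat.card_Icc] at this
    grind
  · simpa using htu

section Tableau

variable {n : ℕ} {a : ℤ → ℤ → ℤ} {K : Finset ℕ} {c : ℕ → ℕ → ℤ} {p q : ℕ}

lemma IsKTab.kth_le (hc : IsKTab K c) (hp : 1 ≤ p) (hpq : p ≤ q) (hq : q ≤ K.card) :
    (kth K p : ℤ) ≤ c p q := by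
  induction q, hpq using Nat.le_induction with
  | base => exact (hc.1 p hp hq).ge
  | succ q hpq ih => exact (ih (by omega)).trans (hc.2.1 p q hp hpq hq)

lemma IsKTab.add_sub_le_kth (hc : IsKTab K c) (hp : 1 ≤ p) (hpq : p ≤ q) (hq : q ≤ K.card) :
    c p q + (q - p) ≤ kth K q := by
  induction hpq using Nat.decreasingInduction with
  | self => simp [hc.1 q hp hq]
  | of_succ p hpq ih =>
    have := ih (by omega)
    have := hc.2.2 p q hp hpq hq
    push_cast at *
    omega

lemma mem_interlacing_Icc_iff {N l : ℕ} {f g : ℕ → ℕ} :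
    g ∈ interlacing N 0 (Finset.Icc 1 l) f ↔ (∀ p ∈ Finset.Icc 1 l, f p ≤ g p ∧ g p ≤ N) ∧
      ∀ p, 1 ≤ p → p + 1 ≤ l → g p < f (p + 1) := by
  refine ⟨fun h => ⟨fun p hp => ⟨(h.1 p hp).1, (h.1 p hp).2.1⟩,
    fun p hp hpl => h.2 p (by grind) (p + 1) (by grind) p.lt_succ_self⟩, fun ⟨hfg, hadj⟩ =>
    ⟨fun p hp => ⟨(hfg p hp).1, (hfg p hp).2, by simp⟩, fun p hp q hq (hpq : p + 1 ≤ q) => ?_⟩⟩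
  induction q, hpq using Nat.le_induction with
  | base => exact hadj p (Finset.mem_Icc.1 hp).1 (Finset.mem_Icc.1 hq).2
  | succ q hpq ih =>
    have hq' : q ∈ Finset.Icc 1 l := by grind
    exact (ih hq').trans ((hfg q hq').1.trans_lt (hadj q (by grind) (by grind)))

/-- The interlacing pattern of a tableau: layer `x` is the `x`-th superdiagonal, continued by the
largest admissible entries, at which a Lusztig datum vanishes. -/
def tableauPattern (n : ℕ) (K : Finset ℕ) (c : ℕ → ℕ → ℤ) (x p : ℕ) : ℕ :=
  if p + x ≤ K.card then (c p (p + x)).toNat else n + 1 + p - K.card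

lemma IsKTab.tableauPattern_eq (n : ℕ) {x : ℕ} (hc : IsKTab K c) (hp : 1 ≤ p)
    (hx : p + x ≤ K.card) : (tableauPattern n K c x p : ℤ) = c p (p + x) := by
  have := hc.kth_le hp (Nat.le_add_right p x) hx
  rw [tableauPattern, if_pos hx]
  omega

lemma kth_le_of_subset_Icc (hK : K ⊆ Finset.Icc 1 (n + 1)) (hp : p ∈ Finset.Icc 1 K.card) :
    kth K p ≤ n + 1 :=
  (Finset.mem_Icc.1 (hK (kth_mem hp))).2

lemma card_le_of_subset_Icc (hK : K ⊆ Finset.Icc 1 (n + 1)) : K.card ≤ n + 1 := by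
  simpa using Finset.card_le_card hK

lemma IsKTab.tableauPattern_add_le (hc : IsKTab K c) (hK : K ⊆ Finset.Icc 1 (n + 1)) {x : ℕ}
    (hp : 1 ≤ p) (hx : p + x ≤ K.card) : tableauPattern n K c x p + x ≤ n + 1 := by
  have heq := hc.tableauPattern_eq n hp hx
  have hbound := hc.add_sub_le_kth hp (Nat.le_add_right p x) hx
  have hkth := kth_le_of_subset_Icc hK (Finset.mem_Icc.2 ⟨by omega, hx⟩)
  omega

lemma IsKTab.tableauPattern_le (hc : IsKTab K c) (hK : K ⊆ Finset.Icc 1 (n + 1)) (x : ℕ)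
    (hp : p ∈ Finset.Icc 1 K.card) : tableauPattern n K c x p ≤ n + 1 := by
  obtain ⟨hp, hpK⟩ := Finset.mem_Icc.1 hp
  by_cases hx : p + x ≤ K.card
  · exact (Nat.le_add_right _ _).trans (hc.tableauPattern_add_le hK hp hx)
  · rw [tableauPattern, if_neg hx]
    omega

lemma IsKTab.tableauPattern_le_succ (hc : IsKTab K c) (hK : K ⊆ Finset.Icc 1 (n + 1)) (x : ℕ)
    (hp : 1 ≤ p) : tableauPattern n K c x p ≤ tableauPattern n K c (x + 1) p := by
  by_cases hx' : p + (x + 1) ≤ K.card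
  · have hx0 := hc.tableauPattern_eq n hp (by omega : p + x ≤ K.card)
    have hx1 := hc.tableauPattern_eq n hp hx'
    have hmono := hc.2.1 p (p + x) hp (by omega) hx'
    rw [← add_assoc] at hx1
    omega
  rw [tableauPattern.eq_def n K c (x + 1), if_neg hx']
  by_cases hx0 : p + x ≤ K.card
  · have := hc.tableauPattern_add_le hK hp hx0
    omega
  · rw [tableauPattern, if_neg hx0]

lemma IsKTab.tableauPattern_succ_lt (hc : IsKTab K c) (hK : K ⊆ Finset.Icc 1 (n + 1)) (x : ℕ)
    (hp : 1 ≤ p) : tableauPattern n K c (x + 1) p < tableauPattern n K c x (p + 1) := by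
  by_cases hx : p + 1 + x ≤ K.card
  · have hx0 := hc.tableauPattern_eq n (by omega) hx
    have hx1 := hc.tableauPattern_eq n hp (by omega : p + (x + 1) ≤ K.card)
    have hlt := hc.2.2 p (p + 1 + x) hp (by omega) hx
    rw [show p + (x + 1) = p + 1 + x by ring] at hx1
    omega
  · have hcard := card_le_of_subset_Icc hK
    rw [tableauPattern, tableauPattern, if_neg hx, if_neg (by omega)]
    omega

lemma IsKTab.tableauPattern_mem (hc : IsKTab K c) (hK : K ⊆ Finset.Icc 1 (n + 1)) :
    tableauPattern n K c ∈ interlacingPattern (n + 1) n (Finset.Icc 1 K.card) (kth K) := by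
  refine ⟨fun p hp => ?_, fun x _ => mem_interlacing_Icc_iff.2
    ⟨fun p hp => ⟨hc.tableauPattern_le_succ hK x (Finset.mem_Icc.1 hp).1,
      hc.tableauPattern_le hK (x + 1) hp⟩, fun p hp _ => hc.tableauPattern_succ_lt hK x hp⟩⟩
  have hp := Finset.mem_Icc.1 hp
  have := hc.tableauPattern_eq n (x := 0) hp.1 hp.2
  rw [add_zero, hc.1 p hp.1 hp.2] at this
  exact_mod_cast this

/-- The weight in an interlacing pattern that corresponds to `a_{c, c + (q - p)}` on the
superdiagonal `q - p = x + 1` of a tableau. -/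
def superdiagonalWeight (a : ℤ → ℤ → ℤ) (x c : ℕ) : ℤ := a c (c + (x + 1))

lemma tabSum_eq_sum_superdiagonal (a : ℤ → ℤ → ℤ) (c : ℕ → ℕ → ℤ) (hK : K.card ≤ n + 1) :
    tabSum a K c = ∑ x ∈ Finset.range n, ∑ p ∈ Finset.Icc 1 K.card,
      if p + (x + 1) ≤ K.card then a (c p (p + (x + 1))) (c p (p + (x + 1)) + (x + 1)) else 0 := by
  rw [Finset.sum_comm, tabSum]
  refine Finset.sum_congr rfl fun p hp => ?_
  rw [← Finset.sum_filter]
  refine Finset.sum_nbij' (fun q => q - p - 1) (fun x => p + (x + 1)) (by grind) (by grind)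
    (by grind) (by grind) fun q hq => ?_
  obtain ⟨x, rfl⟩ := Nat.exists_eq_add_of_le (Finset.mem_Icc.1 hq).1
  rw [show p + 1 + x - p - 1 = x by omega, show p + (x + 1) = p + 1 + x by ring]
  push_cast
  ring_nf

lemma IsKTab.patternSum_tableauPattern (ha : IsLusztig n a) (hc : IsKTab K c)
    (hK : K.card ≤ n + 1) :
    patternSum (superdiagonalWeight a) n (Finset.Icc 1 K.card) (tableauPattern n K c) =
      tabSum a K c := by
  rw [tabSum_eq_sum_superdiagonal a c hK, patternSum]
  refine Finset.sum_congr rfl fun x _ => Finset.sum_congr rfl fun p hp => ?_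
  split_ifs with hx
  · rw [superdiagonalWeight, hc.tableauPattern_eq n (Finset.mem_Icc.1 hp).1 hx]
  · refine ha.2 _ _ ?_
    rw [tableauPattern, if_neg hx]
    omega

lemma isKTab_of_mem_interlacingPattern {e : ℕ → ℕ → ℕ} (hK : K.card ≤ n + 1)
    (he : e ∈ interlacingPattern (n + 1) n (Finset.Icc 1 K.card) (kth K)) :
    IsKTab K fun p q => (e (q - p) p : ℤ) := by
  refine ⟨fun p hp hpl => ?_, fun p q hp hpq hq => ?_, fun p q hp hpq hq => ?_⟩
  · simpa using he.1 (Finset.mem_Icc.2 ⟨hp, hpl⟩)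
  · simp only [Nat.sub_add_comm hpq]
    exact_mod_cast ((he.2 (q - p) (by omega)).1 p (by grind)).1
  · obtain ⟨x, rfl⟩ := Nat.exists_eq_add_of_le hpq
    have := (mem_interlacing_Icc_iff.1 (he.2 x (by omega))).2 p hp (by omega)
    simp only [show p + 1 + x - p = x + 1 by omega, Nat.add_sub_cancel_left]
    exact_mod_cast this

lemma tabSum_le_patternSum (ha : IsLusztig n a) (hK : K.card ≤ n + 1) (e : ℕ → ℕ → ℕ) :
    tabSum a K (fun p q => (e (q - p) p : ℤ)) ≤
      patternSum (superdiagonalWeight a) n (Finset.Icc 1 K.card) e := by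
  rw [tabSum_eq_sum_superdiagonal a _ hK, patternSum]
  refine Finset.sum_le_sum fun x _ => Finset.sum_le_sum fun p _ => ?_
  split_ifs
  · simp [superdiagonalWeight]
  · exact ha.1 _ _

lemma isLeast_tropicalMinor (ha : IsLusztig n a) (hK : K ⊆ Finset.Icc 1 (n + 1)) :
    IsLeast {z : ℤ | ∃ c : ℕ → ℕ → ℤ, IsKTab K c ∧ z = tabSum a K c}
      (tropicalMinor (n + 1) n (superdiagonalWeight a) K) := by
  have hcard := card_le_of_subset_Icc hK
  have hkth : ∀ p ∈ Finset.Icc 1 K.card, kth K p ≤ n + 1 := fun p => kth_le_of_subset_Icc hK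
  have hlower : ∀ c, IsKTab K c →
      tropicalMinor (n + 1) n (superdiagonalWeight a) K ≤ tabSum a K c := fun c hc => by
    rw [← hc.patternSum_tableauPattern ha hcard]
    conv_lhs => rw [← image_kth K]
    exact tropicalMinor_le_patternSum _ (strictMonoOn_kth K) hkth (hc.tableauPattern_mem hK)
  refine ⟨?_, fun z ⟨c, hc, hz⟩ => hz ▸ hlower c hc⟩
  obtain ⟨e, he, hmin⟩ := exists_tropicalMinor_eq_patternSum n (superdiagonalWeight a)
    (strictMonoOn_kth K) hkth
  rw [image_kth] at hmin
  have hc := isKTab_of_mem_interlacingPattern hcard he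
  exact ⟨_, hc, (hlower _ hc).antisymm (hmin ▸ tabSum_le_patternSum ha hcard e)⟩

lemma IsKTab.eq_of_Icc {i j : ℕ} (hc : IsKTab (Finset.Icc i j) c) (hp : 1 ≤ p) (hpq : p ≤ q)
    (hq : q ≤ (Finset.Icc i j).card) : c p q = i + (p - 1) := by
  have hlower := hc.kth_le hp hpq hq
  have hupper := hc.add_sub_le_kth hp hpq hq
  rw [kth_Icc (by grind)] at hlower hupper
  omega

lemma IsKTab.tabSum_Icc {i j : ℕ} (a : ℤ → ℤ → ℤ) (hi : 1 ≤ i) (hc : IsKTab (Finset.Icc i j) c) :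
    tabSum a (Finset.Icc i j) c =
      ∑ k ∈ Finset.Icc i j, ∑ s ∈ Finset.Icc i (k - 1), a (s : ℤ) (k : ℤ) := by
  have hcard : (Finset.Icc i j).card = j + 1 - i := Nat.card_Icc i j
  rw [tabSum, Finset.sum_sigma', Finset.sum_sigma']
  refine Finset.sum_nbij' (fun x => ⟨i + x.2 - 1, i + x.1 - 1⟩)
    (fun y => ⟨y.2 + 1 - i, y.1 + 1 - i⟩) (by grind) (by grind) (by grind) (by grind) ?_
  rintro ⟨p, q⟩ hpq
  simp only [Finset.mem_sigma, Finset.mem_Icc] at hpq ⊢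
  rw [hc.eq_of_Icc (by omega) (by omega) (by omega)]
  congr 1 <;> omega

lemma tropicalMinor_Icc {i j : ℕ} (ha : IsLusztig n a) (hi : 1 ≤ i) (hj : j ≤ n + 1) :
    tropicalMinor (n + 1) n (superdiagonalWeight a) (Finset.Icc i j) =
      ∑ k ∈ Finset.Icc i j, ∑ s ∈ Finset.Icc i (k - 1), a (s : ℤ) (k : ℤ) := by
  obtain ⟨c, hc, hmin⟩ := (isLeast_tropicalMinor ha (Finset.Icc_subset_Icc hi hj)).1
  rw [hmin, hc.tabSum_Icc a hi]

lemma MK_eq_tropicalMinor (ha : IsLusztig n a) (hK : K ⊆ Finset.Icc 1 (n + 1)) :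
    MK n a K = tropicalMinor (n + 1) n (superdiagonalWeight a) K +
      ∑ k ∈ K, -∑ s ∈ Finset.Icc 1 (k - 1), a (s : ℤ) (k : ℤ) := by
  rw [MK, Finset.sum_neg_distrib]
  split_ifs with h
  · obtain ⟨j, hj, rfl⟩ : ∃ j ≤ n + 1, K = Finset.Icc 1 j :=
      h.elim (fun h => ⟨0, by omega, h⟩) fun h => ⟨n + 1, le_rfl, h⟩
    rw [tropicalMinor_Icc ha le_rfl hj, add_neg_cancel]
  · rw [(isLeast_tropicalMinor ha hK).csInf_eq, add_comm]

lemma MK_Icc {i j : ℕ} (ha : IsLusztig n a) (hi : 1 ≤ i) (hj : j ≤ n + 1) :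
    MK n a (Finset.Icc i j) =
      -∑ k ∈ Finset.Icc i j, ∑ s ∈ Finset.Ico 1 i, a (s : ℤ) (k : ℤ) := by
  rw [MK_eq_tropicalMinor ha (Finset.Icc_subset_Icc hi hj), tropicalMinor_Icc ha hi hj,
    ← Finset.sum_add_distrib, ← Finset.sum_neg_distrib]
  refine Finset.sum_congr rfl fun k hk => ?_
  have hunion : Finset.Icc 1 (k - 1) = Finset.Ico 1 i ∪ Finset.Icc i (k - 1) := by grind
  have hdisj : Disjoint (Finset.Ico 1 i) (Finset.Icc i (k - 1)) :=
    Finset.disjoint_left.2 (by grind)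
  rw [hunion, Finset.sum_union hdisj]
  ring

end Tableau

section BZ

variable {n : ℕ} {a : ℤ → ℤ → ℤ} {M M' : Finset ℕ → ℤ}

lemma IsTropicalPlucker.isBZ {F : Finset ℕ → ℤ} (hF : IsTropicalPlucker F)
    (hM : ∀ K ⊆ Finset.Icc 1 (n + 1), M K = F K) (hempty : M ∅ = 0)
    (hfull : M (Finset.Icc 1 (n + 1)) = 0) : IsBZ n M := by
  refine ⟨hempty, hfull, fun i j K hi hin hj hjn hij hK hiK hjK => ?_,
    fun i j k K hi hij hjk hkn hK hiK hjK hkK => ?_⟩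
  · simp only [hM, Finset.insert_subset_iff, Finset.mem_Icc, hi, hin, hj, hjn, hK, and_self]
    exact hF.supermodular hij hiK hjK
  · have hin : i ≤ n + 1 := by omega
    have hj : 1 ≤ j := by omega
    have hjn : j ≤ n + 1 := by omega
    have hk : 1 ≤ k := by omega
    simp only [hM, Finset.insert_subset_iff, Finset.mem_Icc, hi, hin, hj, hjn, hk, hkn, hK,
      and_self]
    exact hF.three_term hij hjk hiK hjK hkK

lemma isEBZ_MK (ha : IsLusztig n a) : IsEBZ n (MK n a) := by
  refine ⟨((isTropicalPlucker_tropicalMinor (n + 1) n _).add_sum _).isBZ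
    (fun K => MK_eq_tropicalMinor ha) (by simp [MK]) (by simp [MK]), fun i _ hi => ?_⟩
  rw [MK_Icc ha le_rfl (by omega)]
  simp

/-- The Lusztig coordinate `a_{i,j}` read off the values of a BZ datum on intervals. -/
def lusztigCoord (M : Finset ℕ → ℤ) (i j : ℕ) : ℤ :=
  M (Finset.Icc i j) - M (Finset.Icc i (j - 1)) - M (Finset.Icc (i + 1) j) +
    M (Finset.Icc (i + 1) (j - 1))

lemma lusztigCoord_MK {i j : ℕ} (ha : IsLusztig n a) (hi : 1 ≤ i) (hij : i < j) (hj : j ≤ n + 1) :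
    lusztigCoord (MK n a) i j = a i j := by
  obtain ⟨j, rfl⟩ : ∃ m, j = m + 1 := ⟨j - 1, by omega⟩
  rw [lusztigCoord, MK_Icc ha hi hj, MK_Icc ha hi (by omega), MK_Icc ha (by omega) hj,
    MK_Icc ha (by omega) (by omega), Nat.add_sub_cancel, Finset.sum_Icc_succ_top (by omega),
    Finset.sum_Icc_succ_top (by omega), Finset.sum_Ico_succ_top hi]
  ring

lemma IsBZ.lusztigCoord_nonneg {i j : ℕ} (hM : IsBZ n M) (hi : 1 ≤ i) (hij : i < j)
    (hj : j ≤ n + 1) : 0 ≤ lusztigCoord M i j := by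
  have hsuper := hM.2.2.1 i j (Finset.Icc (i + 1) (j - 1)) hi (by omega) (by omega) hj hij.ne
    (Finset.Icc_subset_Icc (by omega) (by omega)) (by grind) (by grind)
  rw [show insert i (Finset.Icc (i + 1) (j - 1)) = Finset.Icc i (j - 1) by grind,
    show insert j (Finset.Icc (i + 1) (j - 1)) = Finset.Icc (i + 1) j by grind,
    show insert i (Finset.Icc (i + 1) j) = Finset.Icc i j by grind] at hsuper
  rw [lusztigCoord]
  omega

lemma IsBZ.ext_of_three_term {u j v : ℕ} {K : Finset ℕ} (hM : IsBZ n M) (hM' : IsBZ n M')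
    (hu : 1 ≤ u) (hv : v ≤ n + 1) (hK : K ⊆ Finset.Icc u v) (huK : u ∈ K) (hvK : v ∈ K)
    (hj : j ∈ Finset.Icc u v) (hjK : j ∉ K)
    (hlow : ∀ L ⊆ Finset.Icc u (v - 1), M L = M' L)
    (hhigh : ∀ L ⊆ Finset.Icc (u + 1) v, M L = M' L) : M K = M' K := by
  obtain ⟨huj, hjv⟩ := Finset.mem_Icc.1 hj
  have huj : u < j := huj.lt_of_ne (by grind)
  have hjv : j < v := hjv.lt_of_ne (by grind)
  set L := (K.erase u).erase v
  have hKL : K = insert u (insert v L) := by grind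
  have hLu : insert u (insert j L) ⊆ Finset.Icc u (v - 1) := by grind
  have hLv : insert j (insert v L) ⊆ Finset.Icc (u + 1) v := by grind
  have hM3 := hM.2.2.2 u j v L hu huj hjv hv (by grind) (by grind) (by grind) (by grind)
  have hM3' := hM'.2.2.2 u j v L hu huj hjv hv (by grind) (by grind) (by grind) (by grind)
  rw [← hKL] at hM3 hM3'
  rw [hlow _ hLu, hhigh _ hLv, hlow (insert j L) (by grind), hlow (insert u L) (by grind),
    hhigh (insert v L) (by grind)] at hM3
  omega

lemma IsBZ.ext_of_intervals {K : Finset ℕ} (hM : IsBZ n M) (hM' : IsBZ n M')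
    (h : ∀ i j, 1 ≤ i → j ≤ n + 1 → M (Finset.Icc i j) = M' (Finset.Icc i j)) {u v : ℕ}
    (hu : 1 ≤ u) (hv : v ≤ n + 1) (hK : K ⊆ Finset.Icc u v) : M K = M' K := by
  induction hd : v + 1 - u generalizing u v K with
  | zero =>
    rw [Finset.Icc_eq_empty (by omega), Finset.subset_empty] at hK
    rw [hK, hM.1, hM'.1]
  | succ d ih =>
    have hlow : ∀ L ⊆ Finset.Icc u (v - 1), M L = M' L := fun L hL =>
      ih hu (by omega) hL (by omega)
    have hhigh : ∀ L ⊆ Finset.Icc (u + 1) v, M L = M' L := fun L hL =>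
      ih (by omega) hv hL (by omega)
    by_cases huK : u ∈ K
    · by_cases hvK : v ∈ K
      · by_cases hKuv : Finset.Icc u v ⊆ K
        · rw [hK.antisymm hKuv, h u v hu hv]
        · obtain ⟨j, hj, hjK⟩ := Finset.not_subset.1 hKuv
          exact hM.ext_of_three_term hM' hu hv hK huK hvK hj hjK hlow hhigh
      · exact hlow K (by grind)
    · exact hhigh K (by grind)

lemma IsEBZ.eq_zero_of_Icc_one {j : ℕ} (hM : IsEBZ n M) (hj : j ≤ n + 1) :
    M (Finset.Icc 1 j) = 0 := by
  rcases Nat.eq_zero_or_pos j with rfl | hj0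
  · exact hM.1.1
  rcases hj.eq_or_lt with rfl | hjn
  · exact hM.1.2.1
  · exact hM.2 j hj0 (by omega)

lemma IsEBZ.eq_on_Icc {i j : ℕ} (hM : IsEBZ n M) (hM' : IsEBZ n M')
    (h : ∀ i j, 1 ≤ i → i < j → j ≤ n + 1 → lusztigCoord M i j = lusztigCoord M' i j)
    (hi : 1 ≤ i) (hj : j ≤ n + 1) : M (Finset.Icc i j) = M' (Finset.Icc i j) := by
  induction i, hi using Nat.le_induction generalizing j with
  | base => rw [hM.eq_zero_of_Icc_one hj, hM'.eq_zero_of_Icc_one hj]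
  | succ i hi ihi =>
    induction j with
    | zero => rw [Finset.Icc_eq_empty (by omega), hM.1.1, hM'.1.1]
    | succ j ihj =>
      rcases lt_or_ge i (j + 1) with hij | hij
      · have hcoord := h i (j + 1) hi hij hj
        simp only [lusztigCoord, Nat.add_sub_cancel, ihi hj, ihi (show j ≤ n + 1 by omega),
          ihj (by omega)] at hcoord
        omega
      · rw [Finset.Icc_eq_empty (by omega), hM.1.1, hM'.1.1]

lemma IsEBZ.ext_of_lusztigCoord {K : Finset ℕ} (hM : IsEBZ n M) (hM' : IsEBZ n M')
    (h : ∀ i j, 1 ≤ i → i < j → j ≤ n + 1 → lusztigCoord M i j = lusztigCoord M' i j)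
    (hK : K ⊆ Finset.Icc 1 (n + 1)) : M K = M' K :=
  hM.1.ext_of_intervals hM'.1 (fun _ _ => hM.eq_on_Icc hM' h) le_rfl le_rfl hK

/-- The Lusztig datum with the coordinates of a BZ datum, extended by zero. -/
def lusztigDatum (n : ℕ) (M : Finset ℕ → ℤ) (k l : ℤ) : ℤ :=
  if 1 ≤ k ∧ k < l ∧ l ≤ (n : ℤ) + 1 then lusztigCoord M k.toNat l.toNat else 0

lemma IsBZ.isLusztig_lusztigDatum (hM : IsBZ n M) : IsLusztig n (lusztigDatum n M) := by
  refine ⟨fun k l => ?_, fun k l h => if_neg h⟩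
  rw [lusztigDatum]
  split_ifs with h
  · exact hM.lusztigCoord_nonneg (by omega) (by omega) (by omega)
  · exact le_rfl

lemma IsEBZ.MK_lusztigDatum {K : Finset ℕ} (hM : IsEBZ n M) (hK : K ⊆ Finset.Icc 1 (n + 1)) :
    MK n (lusztigDatum n M) K = M K := by
  have ha := hM.1.isLusztig_lusztigDatum
  refine (isEBZ_MK ha).ext_of_lusztigCoord hM (fun i j hi hij hj => ?_) hK
  rw [lusztigCoord_MK ha hi hij hj, lusztigDatum, if_pos (by omega)]
  rfl

lemma IsLusztig.lusztigDatum_MK (ha : IsLusztig n a) : lusztigDatum n (MK n a) = a := by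
  funext k l
  rw [lusztigDatum]
  split_ifs with h
  · rw [lusztigCoord_MK ha (by omega) (by omega) (by omega), Int.toNat_of_nonneg (by omega),
      Int.toNat_of_nonneg (by omega)]
  · exact (ha.2 k l h).symm

lemma lusztigDatum_congr (h : ∀ K ⊆ Finset.Icc 1 (n + 1), M K = M' K) :
    lusztigDatum n M = lusztigDatum n M' := by
  have hIcc : ∀ i j, 1 ≤ i → j ≤ n + 1 → M (Finset.Icc i j) = M' (Finset.Icc i j) :=
    fun i j hi hj => h _ (Finset.Icc_subset_Icc hi hj)
  funext k l
  rw [lusztigDatum, lusztigDatum]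
  split_ifs with hkl
  · rw [lusztigCoord, lusztigCoord, hIcc, hIcc, hIcc, hIcc] <;> omega
  · rfl

end BZ

/-- the map `Ψ : ℬ → BZ^e`, `a ↦ (M_K(a))_{K ∈ M_n^×}`, is a bijection from
the set of Lusztig data onto the set of `e`-BZ data: it is well defined, injective, and
surjective (BZ data being collections indexed by Maya diagrams `K ⊆ [1,n+1]`). -/
theorem stmt10 (n : ℕ) (hn : 1 ≤ n) :
    (∀ a : ℤ → ℤ → ℤ, IsLusztig n a → IsEBZ n (MK n a)) ∧
    (∀ a b : ℤ → ℤ → ℤ, IsLusztig n a → IsLusztig n b →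
      (∀ K : Finset ℕ, K ⊆ Finset.Icc 1 (n + 1) → MK n a K = MK n b K) → a = b) ∧
    (∀ M : Finset ℕ → ℤ, IsEBZ n M →
      ∃ a : ℤ → ℤ → ℤ, IsLusztig n a ∧
        ∀ K : Finset ℕ, K ⊆ Finset.Icc 1 (n + 1) → MK n a K = M K) := by
  refine ⟨fun a ha => isEBZ_MK ha, fun a b ha hb h => ?_, fun M hM =>
    ⟨lusztigDatum n M, hM.1.isLusztig_lusztigDatum, fun K hK => hM.MK_lusztigDatum hK⟩⟩
  rw [← ha.lusztigDatum_MK, ← hb.lusztigDatum_MK, lusztigDatum_congr h]
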